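/- arXiv:2604.03789 — 2 statements merged into one kernel-verified Lean document; each statement's English description precedes it below -/
import Mathlib

section
/- A one-dimensional Noetherian local domain is weakly quasi-complete if and only if it is analytically irreducible, that is, its completion with respect to the maximal ideal is an integral domain. -/
/-- A local ring `R` is quasi-complete if for any antitone sequence of ideals
`A : ℕ → Ideal R` and each `k : ℕ`, there exists `s` such that
`A s ≤ (⨅ n, A n) ⊔ (IsLocalRing.maximalIdeal R) ^ k`. -/
def IsQuasiComplete (R : Type*) [CommRing R] [IsLocalRing R] : Prop :=
  ∀ A : ℕ → Ideal R, Antitone A → ∀ k : ℕ, ∃ s,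
    A s ≤ (⨅ n, A n) ⊔ (IsLocalRing.maximalIdeal R) ^ k

/-- A local ring `R` is weakly quasi-complete if the above holds for antitone
sequences with `⨅ n, A n = ⊥`. -/
def IsWeaklyQuasiComplete (R : Type*) [CommRing R] [IsLocalRing R] : Prop :=
  ∀ A : ℕ → Ideal R, Antitone A → (⨅ n, A n) = ⊥ → ∀ k : ℕ, ∃ s,
    A s ≤ (IsLocalRing.maximalIdeal R) ^ k

/-!
Let `M` be the maximal ideal of `R` and `S` the `M`-adic completion of `R`.

If `R` is weakly quasi-complete and `x * y = 0` in `S` with `y ≠ 0`, consider the contractions to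
`R` of the ideals `(x) + M ^ n S`. An element of all of them kills `y`, hence is zero because `S` is
flat over `R`. So the contractions become arbitrarily small, and approximating `x` by elements of
`R` gives `x = 0`.

Conversely, let `S` be a domain and `a ∈ M` a nonzero element, so that `M ^ t ⊆ (a)` for some `t`.
By Chevalley's theorem, applied to `S` and the extensions of the given ideals, it suffices that
every nonzero `x : S` divides a nonzero element of `R`; it divides a power of `a`. Indeed,
Chevalley's theorem for the colon ideals `(a ^ n : x)` provides an `N` such that `a ^ N ∣ x * y`
implies `a ∣ y`, and this bounds the length of `S ⧸ (x, a ^ i)` by that of `S ⧸ (a ^ N)`.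
Hence `(x, a ^ m) = (x, a ^ (m + 1))` for some `m`, and Nakayama's lemma gives `a ^ m ∈ (x)`.
-/

section Chevalley

variable {S : Type*} [CommRing S] {I : Ideal S}

lemma exists_forall_le_sup_of_antitone (J : Ideal S) [IsArtinianRing (S ⧸ J)] {A : ℕ → Ideal S}
    (hA : Antitone A) : ∃ N, ∀ n, A N ≤ A n ⊔ J := by
  let imageModJ : ℕ →o (Ideal (S ⧸ J))ᵒᵈ :=
    ⟨fun n => .toDual ((A n).map (Ideal.Quotient.mk J)), fun _ _ h => Ideal.map_mono (hA h)⟩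
  obtain ⟨N, hN⟩ := IsArtinian.monotone_stabilizes imageModJ
  refine ⟨N, fun n => ?_⟩
  obtain hn | hn := le_total n N
  · exact (hA hn).trans le_sup_left
  · have hmap : (A N).map (Ideal.Quotient.mk J) = (A n).map (Ideal.Quotient.mk J) := hN n hn
    calc A N ≤ ((A N).map (Ideal.Quotient.mk J)).comap (Ideal.Quotient.mk J) := Ideal.le_comap_map
      _ = A n ⊔ J := by
        rw [hmap, Ideal.comap_map_of_surjective' _ Ideal.Quotient.mk_surjective, Ideal.mk_ker]

lemma exists_forall_sub_mem_pow [IsPrecomplete I S] {u : ℕ → S} {k : ℕ}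
    (hu : ∀ i, u (i + 1) - u i ∈ I ^ (k + i)) : ∃ L, ∀ i, u i - L ∈ I ^ (k + i) := by
  have hcauchy : ∀ {i j}, i ≤ j → u i - u j ∈ I ^ (k + i) := by
    intro i j hij
    induction j, hij using Nat.le_induction with
    | base => simp
    | succ j hij ih =>
      simpa using sub_mem ih (Ideal.pow_le_pow_right (Nat.add_le_add_left hij k) (hu j))
  obtain ⟨L, hL⟩ := IsPrecomplete.prec' (I := I) u fun {i j} hij => by
    simpa [SModEq.sub_mem] using Ideal.pow_le_pow_right (Nat.le_add_left i k) (hcauchy hij)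
  refine ⟨L, fun i => ?_⟩
  have hLi : u (k + i) - L ∈ I ^ (k + i) := by simpa [SModEq.sub_mem] using hL (k + i)
  simpa using add_mem (hcauchy (Nat.le_add_left i k)) hLi

-- Chevalley's theorem. By antitonicity `⨅ n, A n ⊔ I ^ n` is the intersection of the `I`-adic
-- closures of the `A n`, so this covers rings in which ideals need not be closed.
theorem exists_le_iInf_sup_pow [IsPrecomplete I S] [∀ n, IsArtinianRing (S ⧸ I ^ n)]
    {A : ℕ → Ideal S} (hA : Antitone A) (k : ℕ) : ∃ s, A s ≤ (⨅ n, A n ⊔ I ^ n) ⊔ I ^ k := by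
  choose N hN using fun i => exists_forall_le_sup_of_antitone (I ^ (k + i)) hA
  have hstep : ∀ i, ∀ u ∈ A (N i), ∃ v ∈ A (N (i + 1)), v - u ∈ I ^ (k + i) := by
    intro i u hu
    obtain ⟨v, hv, w, hw, rfl⟩ := Submodule.mem_sup.1 (hN i (N (i + 1)) hu)
    exact ⟨v, hv, by simpa using hw⟩
  choose! next hnext_mem hnext_sub using hstep
  refine ⟨N 0, fun u₀ hu₀ => ?_⟩
  let u : ℕ → S := Nat.rec u₀ next
  have hu : ∀ i, u i ∈ A (N i) := Nat.rec hu₀ fun i ih => hnext_mem i (u i) ih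
  obtain ⟨L, hL⟩ := exists_forall_sub_mem_pow (u := u) fun i => hnext_sub i (u i) (hu i)
  have hL_mem : L ∈ ⨅ n, A n ⊔ I ^ n := by
    refine (Submodule.mem_iInf _).2 fun n => ?_
    have hI : I ^ (k + n) ≤ A n ⊔ I ^ n :=
      (Ideal.pow_le_pow_right (Nat.le_add_left n k)).trans le_sup_right
    have hun : u n ∈ A n ⊔ I ^ n := sup_le le_sup_left hI (hN n n (hu n))
    simpa using sub_mem hun (hI (hL n))
  exact Submodule.mem_sup.2 ⟨L, hL_mem, u₀ - L, hL 0, add_sub_cancel _ _⟩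

end Chevalley

section Divisibility

variable {S : Type*} [CommRing S]

lemma length_quotient_eq_add (J : Ideal S) (x : S) :
    Module.length S (S ⧸ J) =
      Module.length S (S ⧸ J.colon {x}) + Module.length S (S ⧸ J ⊔ Ideal.span {x}) := by
  have hcolon : J.colon {x} = Submodule.comap (LinearMap.toSpanSingleton S S x) J := by
    ext y
    simp
  let mulX : S ⧸ J.colon {x} →ₗ[S] S ⧸ J :=
    Submodule.mapQ _ _ (LinearMap.toSpanSingleton S S x) hcolon.le
  refine Module.length_eq_add_of_exact mulX (Submodule.factor le_sup_left) ?_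
    (Submodule.factor_surjective _) ?_
  · rw [← LinearMap.ker_eq_bot, Submodule.ker_mapQ, ← hcolon, Submodule.mkQ_map_self]
  · rw [LinearMap.exact_iff, Submodule.range_mapQ, LinearMap.range_toSpanSingleton,
      Submodule.factor, Submodule.ker_mapQ, Submodule.comap_id, Submodule.map_sup,
      Submodule.mkQ_map_self, bot_sup_eq]

lemma exists_succ_eq_of_length_le {J : ℕ → Ideal S} (hJ : Antitone J) {c : ℕ∞} (hc : c ≠ ⊤)
    (hlen : ∀ n, Module.length S (S ⧸ J n) ≤ c) : ∃ n, J (n + 1) = J n := by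
  by_contra! hne
  have hn : ∀ n : ℕ, (n : ℕ∞) ≤ Module.length S (S ⧸ J n) := by
    intro n
    induction n with
    | zero => simp
    | succ n ih =>
      rw [Module.length_quotient] at ih ⊢
      push_cast
      exact (add_le_add_left ih 1).trans
        (Order.coheight_add_one_le ((hJ n.le_succ).lt_of_ne (hne n)))
  exact hc (ENat.eq_top_iff_forall_ge.2 fun n => (hn n).trans (hlen n))

lemma pow_succ_dvd_of_pow_add_dvd_mul {b x : S} (hb : b ∈ nonZeroDivisors S) {N : ℕ}
    (hN : ∀ y, b ^ N ∣ x * y → b ∣ y) (i : ℕ) {y : S} (hy : b ^ (N + i) ∣ x * y) :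
    b ^ (i + 1) ∣ y := by
  induction i generalizing y with
  | zero => simpa using hN y hy
  | succ i ih =>
    obtain ⟨z, rfl⟩ := hN y ((pow_dvd_pow b (Nat.le_add_right N (i + 1))).trans hy)
    rw [← add_assoc, pow_succ', mul_left_comm, dvd_cancel_left_mem_nonZeroDivisors hb] at hy
    rw [pow_succ']
    exact mul_dvd_mul_left b (ih hy)

lemma ord_pow_ne_top {b : S} (hb : b ∈ nonZeroDivisors S) (hfin : Ring.ord S b ≠ ⊤) (n : ℕ) :
    Ring.ord S (b ^ n) ≠ ⊤ := by
  rw [Ring.ord_pow hb, nsmul_eq_mul]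
  exact WithTop.mul_ne_top (ENat.natCast_ne_top n) hfin

lemma length_quotient_span_pow_sup_le {b x : S} (hb : b ∈ nonZeroDivisors S)
    (hfin : Ring.ord S b ≠ ⊤) {N : ℕ} (hN : ∀ y, b ^ N ∣ x * y → b ∣ y) (i : ℕ) :
    Module.length S (S ⧸ Ideal.span {b ^ i} ⊔ Ideal.span {x}) ≤ Ring.ord S (b ^ N) := by
  have hcolon : (Ideal.span {b ^ (N + i)}).colon {x} ≤ Ideal.span {b ^ i} := by
    intro y hy
    rw [Submodule.mem_colon_singleton, smul_eq_mul, mul_comm, Ideal.mem_span_singleton] at hy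
    rw [Ideal.mem_span_singleton]
    exact (pow_dvd_pow b i.le_succ).trans (pow_succ_dvd_of_pow_add_dvd_mul hb hN i hy)
  have hle : Ideal.span {b ^ (N + i)} ≤ Ideal.span {b ^ i} :=
    Ideal.span_singleton_le_span_singleton.2 (pow_dvd_pow b (Nat.le_add_left i N))
  rw [← ENat.add_le_add_iff_left (ord_pow_ne_top hb hfin i)]
  calc Ring.ord S (b ^ i) + Module.length S (S ⧸ Ideal.span {b ^ i} ⊔ Ideal.span {x})
      ≤ Module.length S (S ⧸ (Ideal.span {b ^ (N + i)}).colon {x}) +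
          Module.length S (S ⧸ Ideal.span {b ^ (N + i)} ⊔ Ideal.span {x}) :=
        add_le_add (Module.length_le_of_surjective _ (Submodule.factor_surjective hcolon))
          (Module.length_le_of_surjective _ (Submodule.factor_surjective (sup_le_sup_right hle _)))
    _ = Ring.ord S (b ^ (N + i)) := (length_quotient_eq_add _ x).symm
    _ = Ring.ord S (b ^ i) + Ring.ord S (b ^ N) := by
        rw [add_comm N i, pow_add, Ring.ord_mul S (pow_mem hb N)]

lemma exists_forall_pow_dvd_mul_imp_dvd {I : Ideal S} [IsAdicComplete I S]
    [∀ n, IsArtinianRing (S ⧸ I ^ n)] {b x : S} (hbI : b ∈ I) {t : ℕ} (ht : I ^ t ≤ Ideal.span {b})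
    (hx : x ∈ nonZeroDivisors S) : ∃ N, ∀ y, b ^ N ∣ x * y → b ∣ y := by
  let D : ℕ → Ideal S := fun n => (Ideal.span {b ^ n}).colon {x}
  have hD : Antitone D := fun m n hmn => Submodule.colon_mono
    (Ideal.span_singleton_le_span_singleton.2 (pow_dvd_pow b hmn)) subset_rfl
  have hD_closure : ⨅ n, D n ⊔ I ^ n = ⊥ := by
    refine eq_bot_iff.2 fun y hy => ?_
    have hxy : x * y = 0 := IsHausdorff.haus' (I := I) _ fun n => by
      have : D n ⊔ I ^ n ≤ (I ^ n).colon {x} := sup_le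
        (Submodule.colon_mono ((Ideal.span_singleton_le_iff_mem _).2 (Ideal.pow_mem_pow hbI n))
          subset_rfl) Ideal.le_colon
      simpa [SModEq.zero, mul_comm] using this ((Submodule.mem_iInf _).1 hy n)
    exact (mul_left_mem_nonZeroDivisors_eq_zero_iff hx).1 hxy
  obtain ⟨N, hN⟩ := exists_le_iInf_sup_pow (I := I) hD t
  rw [hD_closure, bot_sup_eq] at hN
  refine ⟨N, fun y hy => Ideal.mem_span_singleton.1 (ht (hN ?_))⟩
  simpa [D, Ideal.mem_span_singleton, mul_comm] using hy

lemma ord_ne_top_of_pow_le_span {I : Ideal S} {b : S} {t : ℕ} [IsArtinianRing (S ⧸ I ^ t)]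
    (ht : I ^ t ≤ Ideal.span {b}) : Ring.ord S b ≠ ⊤ := by
  have hlen : Module.length S (S ⧸ I ^ t) ≠ ⊤ := by
    rw [Module.length_eq_of_surjective (R := S ⧸ I ^ t) Ideal.Quotient.mk_surjective]
    exact Module.length_ne_top
  exact ne_top_of_le_ne_top hlen (Module.length_le_of_surjective _ (Submodule.factor_surjective ht))

theorem exists_dvd_pow_of_pow_le_span {I : Ideal S} [IsAdicComplete I S]
    [∀ n, IsArtinianRing (S ⧸ I ^ n)] {b x : S} (hb : b ∈ nonZeroDivisors S) (hbI : b ∈ I) {t : ℕ}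
    (ht : I ^ t ≤ Ideal.span {b}) (hx : x ∈ nonZeroDivisors S) : ∃ m, x ∣ b ^ m := by
  obtain ⟨N, hN⟩ := exists_forall_pow_dvd_mul_imp_dvd hbI ht hx
  have hfin : Ring.ord S b ≠ ⊤ := ord_ne_top_of_pow_le_span ht
  have hanti : Antitone fun m => Ideal.span {b ^ m} ⊔ Ideal.span {x} := fun m n hmn =>
    sup_le_sup_right (Ideal.span_singleton_le_span_singleton.2 (pow_dvd_pow b hmn)) _
  obtain ⟨m, hm⟩ := exists_succ_eq_of_length_le hanti (ord_pow_ne_top hb hfin N)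
    (length_quotient_span_pow_sup_le hb hfin hN)
  have hsucc : b ^ (m + 1) ∈ I • Ideal.span {b ^ m} := by
    rw [pow_succ']
    exact Submodule.smul_mem_smul hbI (Ideal.mem_span_singleton_self _)
  have hle : Ideal.span {b ^ m} ≤ Ideal.span {x} ⊔ I • Ideal.span {b ^ m} :=
    calc Ideal.span {b ^ m} ≤ Ideal.span {b ^ (m + 1)} ⊔ Ideal.span {x} := hm ▸ le_sup_left
      _ ≤ I • Ideal.span {b ^ m} ⊔ Ideal.span {x} :=
        sup_le_sup_right ((Ideal.span_singleton_le_iff_mem _).2 hsucc) _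
      _ = Ideal.span {x} ⊔ I • Ideal.span {b ^ m} := sup_comm _ _
  exact ⟨m, Ideal.span_singleton_le_span_singleton.1 (Submodule.le_of_le_smul_of_le_jacobson_bot
    (Submodule.fg_span_singleton _) (IsAdicComplete.le_jacobson_bot I) hle)⟩

end Divisibility

section AdicCompletion

variable {R : Type*} [CommRing R] {I : Ideal R}

lemma ker_evalₐ_eq_map_pow (hI : I.FG) (n : ℕ) :
    RingHom.ker (AdicCompletion.evalₐ I n) = I.map (algebraMap R (AdicCompletion I R)) ^ n := by
  ext x
  have heval : AdicCompletion.evalₐ I n x = 0 ↔ AdicCompletion.eval I R n x = 0 := by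
    have hle : I ^ n ≤ I ^ n • ⊤ := (Ideal.mul_top _).ge
    constructor <;> intro h
    · rw [← AdicCompletion.factor_evalₐ_eq_eval I x hle, h, map_zero]
    · rw [← AdicCompletion.factor_eval_eq_evalₐ I x (Ideal.mul_top _).le, h, map_zero]
  rw [RingHom.mem_ker, heval, ← LinearMap.mem_ker, ← AdicCompletion.pow_smul_top_eq_ker_eval hI,
    Ideal.smul_top_eq_map, Ideal.map_pow]
  rfl

lemma isArtinianRing_adicCompletion_quotient_pow (hI : I.FG) (n : ℕ) [IsArtinianRing (R ⧸ I ^ n)] :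
    IsArtinianRing (AdicCompletion I R ⧸ I.map (algebraMap R (AdicCompletion I R)) ^ n) := by
  rw [← ker_evalₐ_eq_map_pow hI]
  exact (RingHom.quotientKerEquivOfSurjective
    (AdicCompletion.surjective_evalₐ I n)).symm.isArtinianRing

lemma exists_sub_algebraMap_mem_map_pow (hI : I.FG) (x : AdicCompletion I R) (n : ℕ) :
    ∃ r : R, x - algebraMap R _ r ∈ I.map (algebraMap R (AdicCompletion I R)) ^ n := by
  obtain ⟨r, hr⟩ := Ideal.Quotient.mk_surjective (AdicCompletion.evalₐ I n x)
  refine ⟨r, ?_⟩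
  rw [← ker_evalₐ_eq_map_pow hI, RingHom.mem_ker, map_sub, AlgHom.commutes, ← hr]
  exact sub_self _

lemma comap_map_algebraMap_adicCompletion_le (J : Ideal R) (n : ℕ) :
    (J.map (algebraMap R (AdicCompletion I R))).comap (algebraMap R _) ≤ J ⊔ I ^ n := by
  intro r hr
  have hmk : (AdicCompletion.evalₐ I n : AdicCompletion I R →+* R ⧸ I ^ n).comp (algebraMap R _) =
      Ideal.Quotient.mk (I ^ n) := (AdicCompletion.evalₐ I n).comp_algebraMap
  have hr_mk : Ideal.Quotient.mk (I ^ n) r ∈ J.map (Ideal.Quotient.mk (I ^ n)) := by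
    rw [← hmk, ← Ideal.map_map]
    exact Ideal.mem_map_of_mem _ hr
  rwa [← Ideal.mem_comap, Ideal.comap_map_of_surjective' _ Ideal.Quotient.mk_surjective,
    Ideal.mk_ker] at hr_mk

lemma iInf_comap_span_sup_pow_eq_bot [IsDomain R] [IsNoetherianRing R]
    {x y : AdicCompletion I R} (hxy : x * y = 0) (hy : y ≠ 0) :
    ⨅ n, (Ideal.span {x} ⊔ I.map (algebraMap R (AdicCompletion I R)) ^ n).comap
      (algebraMap R (AdicCompletion I R)) = ⊥ := by
  let J := I.map (algebraMap R (AdicCompletion I R))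
  have : IsAdicComplete J (AdicCompletion I R) :=
    AdicCompletion.isAdicComplete_self I (IsNoetherian.noetherian I)
  refine eq_bot_iff.2 fun r hr => ?_
  have hry : r • y = 0 := IsHausdorff.haus' (I := J) _ fun n => by
    have hle : Ideal.span {x} ⊔ J ^ n ≤ (J ^ n).colon {y} :=
      sup_le ((Ideal.span_singleton_le_iff_mem _).2 (by simp [hxy])) Ideal.le_colon
    simpa [SModEq.zero, Algebra.smul_def] using hle ((Submodule.mem_iInf _).1 hr n)
  exact (smul_eq_zero.1 hry).resolve_right hy

end AdicCompletion

section Local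

variable {R : Type*} [CommRing R] [IsLocalRing R] [IsNoetherianRing R]

open IsLocalRing

instance isArtinianRing_quotient_maximalIdeal_pow (n : ℕ) :
    IsArtinianRing (R ⧸ maximalIdeal R ^ n) := by
  obtain rfl | hn := eq_or_ne n 0
  · have : Subsingleton (R ⧸ maximalIdeal R ^ 0) := Ideal.Quotient.subsingleton_iff.2 (by simp)
    infer_instance
  · refine quotient_artinian_of_mem_minimalPrimes_of_isLocalRing _ ?_
    refine ⟨⟨inferInstance, Ideal.pow_le_self hn⟩, fun P hP _ => ?_⟩
    exact (hP.1.pow_le_iff hn).1 hP.2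

lemma iInf_sup_maximalIdeal_pow_le {A : ℕ → Ideal R} (hA : Antitone A) :
    ⨅ n, A n ⊔ maximalIdeal R ^ n ≤ ⨅ n, A n := by
  intro r hr
  refine (Submodule.mem_iInf _).2 fun n => ?_
  have hmem : ∀ k, r ∈ A n ⊔ maximalIdeal R ^ k := fun k =>
    sup_le_sup (hA (le_max_left n k)) (Ideal.pow_le_pow_right (le_max_right n k))
      ((Submodule.mem_iInf _).1 hr (max n k))
  refine (Submodule.Quotient.mk_eq_zero _).1
    (IsHausdorff.haus' (I := maximalIdeal R) (M := R ⧸ A n) _ fun k => ?_)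
  obtain ⟨a, ha, c, hc, rfl⟩ := Submodule.mem_sup.1 (hmem k)
  have hac : (Submodule.Quotient.mk (a + c) : R ⧸ A n) = c • Submodule.Quotient.mk 1 := by
    rw [Submodule.Quotient.mk_add, (Submodule.Quotient.mk_eq_zero _).2 ha, zero_add,
      ← Submodule.Quotient.mk_smul, smul_eq_mul, mul_one]
  rw [SModEq.zero, hac]
  exact Submodule.smul_mem_smul hc Submodule.mem_top

theorem isWeaklyQuasiComplete_of_exists_dvd_algebraMap
    (h : ∀ x : AdicCompletion (maximalIdeal R) R, x ≠ 0 →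
      ∃ r : R, r ≠ 0 ∧ x ∣ algebraMap R _ r) :
    IsWeaklyQuasiComplete R := by
  intro A hA hbot k
  let S := AdicCompletion (maximalIdeal R) R
  let I : Ideal S := (maximalIdeal R).map (algebraMap R S)
  have hfg : (maximalIdeal R).FG := IsNoetherian.noetherian _
  have : IsAdicComplete I S := AdicCompletion.isAdicComplete_self _ hfg
  have : ∀ n, IsArtinianRing (S ⧸ I ^ n) := fun n =>
    isArtinianRing_adicCompletion_quotient_pow hfg n
  have hclosure : ⨅ n, (A n).map (algebraMap R S) ⊔ I ^ n = ⊥ := by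
    refine eq_bot_iff.2 fun x hx => by_contra fun hx0 => ?_
    obtain ⟨r, hr0, hxr⟩ := h x hx0
    have hr : r ∈ ⨅ n, A n ⊔ maximalIdeal R ^ n := by
      refine (Submodule.mem_iInf _).2 fun n => ?_
      have hrn := Ideal.mem_of_dvd _ hxr ((Submodule.mem_iInf _).1 hx n)
      rw [← Ideal.map_pow, ← Ideal.map_sup] at hrn
      simpa only [sup_assoc, sup_idem] using comap_map_algebraMap_adicCompletion_le _ n hrn
    exact hr0 ((Submodule.mem_bot R).1 (hbot ▸ iInf_sup_maximalIdeal_pow_le hA hr))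
  obtain ⟨s, hs⟩ := exists_le_iInf_sup_pow (I := I)
    (fun _ _ hmn => Ideal.map_mono (hA hmn) : Antitone fun n => (A n).map (algebraMap R S)) k
  rw [hclosure, bot_sup_eq, ← Ideal.map_pow, Ideal.map_le_iff_le_comap] at hs
  exact ⟨s, hs.trans ((comap_map_algebraMap_adicCompletion_le _ k).trans (sup_idem _).le)⟩

theorem exists_dvd_algebraMap_pow_of_maximalIdeal_le_radical
    {a : R} (ha : a ∈ nonZeroDivisors R) (haM : a ∈ maximalIdeal R)
    (hrad : maximalIdeal R ≤ (Ideal.span {a}).radical) {x : AdicCompletion (maximalIdeal R) R}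
    (hx : x ∈ nonZeroDivisors (AdicCompletion (maximalIdeal R) R)) :
    ∃ m, x ∣ algebraMap R _ (a ^ m) := by
  let S := AdicCompletion (maximalIdeal R) R
  let I : Ideal S := (maximalIdeal R).map (algebraMap R S)
  have hfg : (maximalIdeal R).FG := IsNoetherian.noetherian _
  have : IsAdicComplete I S := AdicCompletion.isAdicComplete_self _ hfg
  have : ∀ n, IsArtinianRing (S ⧸ I ^ n) := fun n =>
    isArtinianRing_adicCompletion_quotient_pow hfg n
  obtain ⟨t, ht⟩ := Ideal.exists_pow_le_of_le_radical_of_fg hrad hfg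
  have hIt : I ^ t ≤ Ideal.span {algebraMap R S a} := by
    rw [← Ideal.map_pow, ← Set.image_singleton, ← Ideal.map_span]
    exact Ideal.map_mono ht
  have hreg : IsSMulRegular S a := Module.Flat.isSMulRegular_of_nonZeroDivisors ha
  have haS : algebraMap R S a ∈ nonZeroDivisors S :=
    mem_nonZeroDivisors_iff_left.2 fun y hy =>
      hreg.right_eq_zero_of_smul (by rwa [Algebra.smul_def])
  simp only [map_pow]
  exact exists_dvd_pow_of_pow_le_span haS (Ideal.mem_map_of_mem _ haM) hIt hx

theorem isDomain_adicCompletion_of_isWeaklyQuasiComplete [IsDomain R]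
    (h : IsWeaklyQuasiComplete R) : IsDomain (AdicCompletion (maximalIdeal R) R) := by
  let S := AdicCompletion (maximalIdeal R) R
  let I : Ideal S := (maximalIdeal R).map (algebraMap R S)
  have hfg : (maximalIdeal R).FG := IsNoetherian.noetherian _
  have : IsAdicComplete I S := AdicCompletion.isAdicComplete_self _ hfg
  have : NoZeroDivisors S := by
    refine ⟨fun {x y} hxy => or_iff_not_imp_right.2 fun hy => ?_⟩
    refine IsHausdorff.haus' (I := I) _ fun k => ?_
    obtain ⟨s, hs⟩ := h (fun n => (Ideal.span {x} ⊔ I ^ n).comap (algebraMap R S))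
      (fun m n hmn => Ideal.comap_mono (sup_le_sup_left (Ideal.pow_le_pow_right hmn) _))
      (iInf_comap_span_sup_pow_eq_bot hxy hy) k
    obtain ⟨r, hr⟩ := exists_sub_algebraMap_mem_map_pow hfg x (max s k)
    have hr_comap : algebraMap R S r ∈ Ideal.span {x} ⊔ I ^ s :=
      (Submodule.sub_mem_iff_right _ (Ideal.mem_sup_left (Ideal.mem_span_singleton_self x))).1
        (Ideal.mem_sup_right (Ideal.pow_le_pow_right (le_max_left s k) hr))
    have hr_pow : algebraMap R S r ∈ I ^ k := by
      rw [← Ideal.map_pow]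
      exact Ideal.mem_map_of_mem _ (hs hr_comap)
    have hx : x ∈ I ^ k :=
      (Submodule.sub_mem_iff_left _ hr_pow).1 (Ideal.pow_le_pow_right (le_max_right s k) hr)
    simpa only [SModEq.zero, smul_eq_mul, Ideal.mul_top] using hx
  exact NoZeroDivisors.to_isDomain S

end Local

/-- A one-dimensional Noetherian local domain is weakly quasi-complete iff it is
analytically irreducible, i.e. its maximal-adic completion is a domain. -/
theorem dim1_weaklyQuasiComplete_iff_analyticallyIrreducible
    (R : Type*) [CommRing R] [IsDomain R] [IsLocalRing R] [IsNoetherianRing R]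
    (hdim : ringKrullDim R = 1) :
    IsWeaklyQuasiComplete R ↔
      IsDomain (AdicCompletion (IsLocalRing.maximalIdeal R) R) := by
  refine ⟨isDomain_adicCompletion_of_isWeaklyQuasiComplete, fun _ => ?_⟩
  obtain ⟨hfield, hradical⟩ := ringKrullDim_eq_one_iff_of_isLocalRing_isDomain.1 hdim
  obtain ⟨a, haM, ha0⟩ := Submodule.exists_mem_ne_zero_of_ne_bot
    (mt IsLocalRing.isField_iff_maximalIdeal_eq.2 hfield)
  refine isWeaklyQuasiComplete_of_exists_dvd_algebraMap fun x hx => ?_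
  obtain ⟨m, hm⟩ := exists_dvd_algebraMap_pow_of_maximalIdeal_le_radical
    (mem_nonZeroDivisors_of_ne_zero ha0) haM (hradical a ha0) (mem_nonZeroDivisors_of_ne_zero hx)
  exact ⟨a ^ m, pow_ne_zero m ha0, hm⟩
end

section
/- There exists a weakly quasi-complete Noetherian local ring that is not quasi-complete. -/
/-!
Let `R` be the local ring at the origin `(p, x, y)` of the curve `y² = xy - x³ + p` over `ℤ_[p]`.
Its completion is compact. Hence if no `A n` is contained in `𝔪 ^ k`, the closures of the `A n` in
the completion have a common nonzero element. Taking norms down to `ℤ_[p]⟦x⟧` and applying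
Weierstrass preparation, some multiple of it is a nonzero polynomial in `x`, which lies in every
`A n` by Krull's intersection theorem; so `R` is weakly quasi-complete.

Modulo `p` the curve is an irreducible nodal cubic with two formal branches at the node. The
functions vanishing to order `s` along one branch form ideals of `R` with intersection `p R`, but
each of them contains an element vanishing only to order one along the other branch, hence lying
outside `p R + 𝔪 ^ 2`; so `R` is not quasi-complete.
-/

section LocalRing

open IsLocalRing Topology

variable {R S : Type*} [CommRing R] [CommRing S]

theorem mul_mem_closure_image_of_denseRange [TopologicalSpace S] [ContinuousMul S] {φ : R →+* S}
    (hφ : DenseRange φ) (I : Ideal R) (u : S) {y : S} (hy : y ∈ closure (φ '' I)) :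
    u * y ∈ closure (φ '' I) := by
  refine map_mem_closure₂ continuous_mul (hφ u) hy ?_
  rintro _ ⟨r, rfl⟩ _ ⟨a, ha, rfl⟩
  exact ⟨r * a, I.mul_mem_left r ha, map_mul φ r a⟩

variable [IsLocalRing R]

theorem mem_of_forall_exists_sub_mem_maximalIdeal_pow [IsNoetherianRing R] {I : Ideal R} {x : R}
    (h : ∀ k, ∃ a ∈ I, x - a ∈ maximalIdeal R ^ k) : x ∈ I := by
  rw [← Ideal.Quotient.eq_zero_iff_mem]
  refine IsHausdorff.haus (I := maximalIdeal R) inferInstance _ fun k ↦ ?_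
  obtain ⟨a, ha, hxa⟩ := h k
  have hmk : Ideal.Quotient.mk I x = (x - a) • (1 : R ⧸ I) := by
    rw [Algebra.smul_def, mul_one, Ideal.Quotient.algebraMap_eq,
      Ideal.Quotient.mk_eq_mk_iff_sub_mem]
    simpa using ha
  rw [SModEq.zero, hmk]
  exact Submodule.smul_mem_smul hxa trivial

theorem mem_of_map_mem_closure_image [IsNoetherianRing R] [TopologicalSpace S]
    [IsTopologicalAddGroup S] {φ : R →+* S}
    (hφ : ∀ k, ((maximalIdeal R ^ k : Ideal R) : Set R) ∈ (𝓝 0).comap φ) {I : Ideal R} {x : R}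
    (hx : φ x ∈ closure (φ '' I)) : x ∈ I := by
  refine mem_of_forall_exists_sub_mem_maximalIdeal_pow fun k ↦ ?_
  obtain ⟨U, hU, hUk⟩ := hφ k
  have hxU : {s | φ x - s ∈ U} ∈ 𝓝 (φ x) :=
    (continuous_const.sub continuous_id).continuousAt.preimage_mem_nhds (by simpa using hU)
  obtain ⟨_, hsU, a, ha, rfl⟩ := mem_closure_iff_nhds.mp hx _ hxU
  exact ⟨a, ha, hUk (by simpa using hsU)⟩

theorem exists_ne_zero_forall_mem_closure_image [TopologicalSpace S] [CompactSpace S] {φ : R →+* S}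
    {k : ℕ} (hφ : ((maximalIdeal R ^ k : Ideal R) : Set R) ∈ (𝓝 0).comap φ) {A : ℕ → Ideal R}
    (hA : Antitone A) (hAk : ∀ n, ¬ A n ≤ maximalIdeal R ^ k) :
    ∃ y ≠ 0, ∀ n, y ∈ closure (φ '' A n) := by
  obtain ⟨U, hUk, hUo, hU0⟩ :
      ∃ U, φ ⁻¹' U ⊆ (maximalIdeal R ^ k : Ideal R) ∧ IsOpen U ∧ 0 ∈ U := by
    obtain ⟨V, hV, hVk⟩ := hφ
    obtain ⟨U, hUV, hUo, hU0⟩ := mem_nhds_iff.mp hV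
    exact ⟨U, (Set.preimage_mono hUV).trans hVk, hUo, hU0⟩
  have hclosed (n : ℕ) : IsClosed (closure (φ '' A n) ∩ Uᶜ) :=
    isClosed_closure.inter hUo.isClosed_compl
  obtain ⟨y, hy⟩ : (⋂ n, closure (φ '' A n) ∩ Uᶜ).Nonempty := by
    refine IsCompact.nonempty_iInter_of_sequence_nonempty_isCompact_isClosed _ (fun n ↦ ?_)
      (fun n ↦ ?_) (hclosed 0).isCompact hclosed
    · gcongr
      exact hA n.le_succ
    · obtain ⟨a, ha, hak⟩ := SetLike.not_le_iff_exists.mp (hAk n)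
      exact ⟨φ a, subset_closure ⟨a, ha, rfl⟩, fun haU ↦ hak (hUk haU)⟩
  rw [Set.mem_iInter] at hy
  exact ⟨y, fun hy0 ↦ (hy 0).2 (hy0 ▸ hU0), fun n ↦ (hy n).1⟩

theorem IsWeaklyQuasiComplete.of_denseRange [IsNoetherianRing R] [TopologicalSpace S]
    [IsTopologicalRing S] [CompactSpace S] {φ : R →+* S} (hdense : DenseRange φ)
    (hφ : ∀ k, ((maximalIdeal R ^ k : Ideal R) : Set R) ∈ (𝓝 0).comap φ)
    (hmul : ∀ y ≠ 0, ∃ u, ∃ q ≠ 0, u * y = φ q) : IsWeaklyQuasiComplete R := by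
  intro A hA hbot k
  by_contra! hAk
  obtain ⟨y, hy0, hy⟩ := exists_ne_zero_forall_mem_closure_image (hφ k) hA hAk
  obtain ⟨u, q, hq0, huy⟩ := hmul y hy0
  have hq (n : ℕ) : q ∈ A n := by
    refine mem_of_map_mem_closure_image hφ ?_
    rw [← huy]
    exact mul_mem_closure_image_of_denseRange hdense (A n) u (hy n)
  exact hq0 (by simpa [hbot] using Ideal.mem_iInf.mpr hq)

theorem IsQuasiComplete.exists_comap_pow_le (hR : IsQuasiComplete R) (φ : R →+* S) {J : Ideal S}
    (hJ : ⨅ n, J ^ n = ⊥) (k : ℕ) :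
    ∃ s, (J ^ s).comap φ ≤ RingHom.ker φ ⊔ maximalIdeal R ^ k := by
  have hinf : ⨅ n, (J ^ n).comap φ = RingHom.ker φ := by rw [← Ideal.comap_iInf, hJ]; rfl
  rw [← hinf]
  exact hR _ (fun _ _ hmn ↦ Ideal.comap_mono (Ideal.pow_le_pow_right hmn)) k

end LocalRing

section PowerSeries

open PowerSeries IsLocalRing

open scoped Polynomial

theorem exists_mul_eq_coe_polynomial {A : Type*} [CommRing A] [IsDomain A]
    [IsDiscreteValuationRing A] [IsAdicComplete (maximalIdeal A) A] {f : A⟦X⟧} (hf : f ≠ 0) :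
    ∃ (u : A⟦X⟧) (q : A[X]), q ≠ 0 ∧ u * f = q := by
  obtain ⟨ϖ, hϖ⟩ := IsDiscreteValuationRing.exists_irreducible A
  have hCϖ : ¬ IsUnit (PowerSeries.C ϖ) := by
    simpa [PowerSeries.isUnit_iff_constantCoeff] using hϖ.not_isUnit
  obtain ⟨g, hfg, hg⟩ := (FiniteMultiplicity.of_not_isUnit hCϖ hf).exists_eq_pow_mul_and_not_dvd
  have hgres : g.map (residue A) ≠ 0 := by
    contrapose! hg
    have hdvd (i : ℕ) : ϖ ∣ coeff i g := by
      rw [← Ideal.mem_span_singleton, ← hϖ.maximalIdeal_eq, ← residue_eq_zero_iff,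
        ← PowerSeries.coeff_map, hg, map_zero]
    choose c hc using hdvd
    exact ⟨.mk c, by ext i; simp [hc]⟩
  obtain ⟨P, h, hPh⟩ := exists_isWeierstrassFactorization hgres
  obtain ⟨v, hv⟩ := hPh.isUnit.exists_left_inv
  refine ⟨v, Polynomial.C ϖ ^ multiplicity (PowerSeries.C ϖ) f * P, ?_, ?_⟩
  · exact mul_ne_zero (pow_ne_zero _ (by simpa using hϖ.ne_zero))
      hPh.isDistinguishedAt.monic.ne_zero
  · nth_rw 1 [hfg, hPh.eq_mul]
    push_cast
    linear_combination (PowerSeries.C ϖ ^ multiplicity (PowerSeries.C ϖ) f * (P : A⟦X⟧)) * hv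

theorem eq_zero_of_quadraticAlgebra_norm_eq_zero {A : Type*} [CommRing A] [IsDomain A] {a b : A⟦X⟧}
    (hab : ∀ c d : A, c * c + constantCoeff b * c * d - constantCoeff a * d * d = 0 →
      c = 0 ∧ d = 0) {z : QuadraticAlgebra A⟦X⟧ a b} (hz : z.norm = 0) : z = 0 := by
  have hdvd (n : ℕ) :
      ∀ z : QuadraticAlgebra A⟦X⟧ a b, z.norm = 0 → X ^ n ∣ z.re ∧ X ^ n ∣ z.im := by
    induction n with
    | zero => simp
    | succ n ih =>
      rintro ⟨c, d⟩ hz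
      obtain ⟨hc, hd⟩ := hab (constantCoeff c) (constantCoeff d)
        (by simpa [QuadraticAlgebra.norm_def] using congrArg constantCoeff hz)
      obtain ⟨c, rfl⟩ := X_dvd_iff.mpr hc
      obtain ⟨d, rfl⟩ := X_dvd_iff.mpr hd
      have hcd : (⟨c, d⟩ : QuadraticAlgebra A⟦X⟧ a b).norm = 0 := by
        refine (mul_eq_zero.mp ?_).resolve_left (pow_ne_zero 2 (X_ne_zero (R := A)))
        rw [← hz, QuadraticAlgebra.norm_def, QuadraticAlgebra.norm_def]
        ring
      obtain ⟨hc, hd⟩ := ih _ hcd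
      rw [pow_succ']
      exact ⟨mul_dvd_mul_left X hc, mul_dvd_mul_left X hd⟩
  ext n
  · exact X_pow_dvd_iff.mp (hdvd (n + 1) z hz).1 n n.lt_succ_self
  · exact X_pow_dvd_iff.mp (hdvd (n + 1) z hz).2 n n.lt_succ_self

theorem eq_zero_of_sq_eq_prime_mul_sq {A : Type*} [CommRing A] [IsDomain A] [IsIntegrallyClosed A]
    {p c d : A} (hp : Prime p) (h : c ^ 2 = p * d ^ 2) : c = 0 ∧ d = 0 := by
  have hd : d = 0 := by
    by_contra hd
    obtain ⟨e, rfl⟩ := (IsIntegrallyClosed.pow_dvd_pow_iff two_ne_zero).mp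
      ⟨p, h.trans (mul_comm _ _)⟩
    refine hp.not_isSquare ⟨e, mul_right_cancel₀ (pow_ne_zero 2 hd) ?_⟩
    linear_combination -h
  simpa [hd] using h

/-- The ideal of power series whose coefficients of degree less than `n` lie in `I`. For open `I`
these ideals form neighbourhoods of `0` in the product topology. -/
def lowCoeffIdeal {A : Type*} [CommRing A] (I : Ideal A) (n : ℕ) : Ideal A⟦X⟧ where
  carrier := {f | ∀ i < n, coeff i f ∈ I}
  add_mem' hf hg i hi := by simpa using add_mem (hf i hi) (hg i hi)
  zero_mem' := by simp
  smul_mem' f g hg i hi := by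
    rw [smul_eq_mul, coeff_mul]
    refine sum_mem fun ij hij ↦ I.mul_mem_left _ (hg _ ?_)
    have := Finset.HasAntidiagonal.mem_antidiagonal.mp hij
    omega

open scoped PowerSeries.WithPiTopology in
theorem isOpen_lowCoeffIdeal {A : Type*} [CommRing A] [TopologicalSpace A] {I : Ideal A}
    (hI : IsOpen (I : Set A)) (n : ℕ) : IsOpen (lowCoeffIdeal I n : Set A⟦X⟧) := by
  have hinter : (lowCoeffIdeal I n : Set A⟦X⟧) = ⋂ i ∈ Set.Iio n, coeff i ⁻¹' (I : Set A) := by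
    ext f
    simp [lowCoeffIdeal]
  rw [hinter]
  exact (Set.finite_Iio n).isOpen_biInter fun i _ ↦
    hI.preimage (PowerSeries.WithPiTopology.continuous_coeff A i)

open scoped PowerSeries.WithPiTopology in
instance {A : Type*} [TopologicalSpace A] [CompactSpace A] : CompactSpace A⟦X⟧ :=
  inferInstanceAs (CompactSpace ((Unit →₀ ℕ) → A))

end PowerSeries

section Polynomial

open Polynomial

variable {A : Type*} [CommRing A]

theorem polynomial_smul_powerSeries (f : A[X]) (g : PowerSeries A) :
    f • g = f * g := by
  rw [Algebra.smul_def, PowerSeries.algebraMap_apply', Algebra.algebraMap_self,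
    PowerSeries.map_id, id]

theorem mem_pow_of_coe_mem_lowCoeffIdeal {I : Ideal A} {J : Ideal A[X]}
    (hI : I.map C ≤ J) (hX : X ∈ J) {k : ℕ} {f : A[X]}
    (hf : (f : PowerSeries A) ∈ lowCoeffIdeal (I ^ k) k) : f ∈ J ^ k := by
  rw [f.as_sum_range_C_mul_X_pow]
  refine sum_mem fun i _ ↦ ?_
  rcases lt_or_ge i k with hik | hki
  · have hcoeff : C (f.coeff i) ∈ I.map C ^ k :=
      Ideal.map_pow C I k ▸ Ideal.mem_map_of_mem C (by simpa using hf i hik)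
    exact Ideal.mul_mem_right _ _ (Ideal.pow_right_mono hI k hcoeff)
  · exact Ideal.mul_mem_left _ _ (Ideal.pow_le_pow_right hki (Ideal.pow_mem_pow hX i))

theorem eq_zero_of_nodal_cubic_eq_zero [IsDomain A] {c d : A[X]}
    (h : c * c + X * c * d + X ^ 3 * d * d = 0) : c = 0 ∧ d = 0 := by
  suffices hd : d = 0 by simpa [hd] using h
  by_contra hd
  have hmul : c * (c + X * d) = -(X ^ 3 * d ^ 2) := by linear_combination h
  have hne : c * (c + X * d) ≠ 0 := by simp [hmul, hd]
  have hdeg := congrArg natDegree hmul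
  rw [natDegree_mul (left_ne_zero_of_mul hne) (right_ne_zero_of_mul hne), natDegree_neg,
    natDegree_X_pow_mul _ (pow_ne_zero 2 hd), natDegree_pow] at hdeg
  have hXd := natDegree_X_mul hd
  rcases lt_trichotomy c.natDegree (X * d).natDegree with hlt | heq | hgt
  · have := natDegree_add_eq_right_of_natDegree_lt hlt
    omega
  · have := natDegree_add_le_of_degree_le heq.le le_rfl
    omega
  · have := natDegree_add_eq_left_of_natDegree_lt hgt
    omega

end Polynomial

section QuadraticAlgebra

variable {A : Type*} [TopologicalSpace A] {a b : A}

/-- The product topology on `A ⊕ A ω`. -/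
instance quadraticAlgebraTopology : TopologicalSpace (QuadraticAlgebra A a b) :=
  .induced (QuadraticAlgebra.equivProd a b) inferInstance

/-- Coordinates with respect to the basis `1, ω`, as a homeomorphism. -/
def quadraticAlgebraHomeomorph (a b : A) : QuadraticAlgebra A a b ≃ₜ A × A :=
  (QuadraticAlgebra.equivProd a b).toHomeomorphOfIsInducing ⟨rfl⟩

@[fun_prop]
theorem continuous_quadraticAlgebra_re :
    Continuous (QuadraticAlgebra.re : QuadraticAlgebra A a b → A) :=
  continuous_fst.comp (quadraticAlgebraHomeomorph a b).continuous

@[fun_prop]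
theorem continuous_quadraticAlgebra_im :
    Continuous (QuadraticAlgebra.im : QuadraticAlgebra A a b → A) :=
  continuous_snd.comp (quadraticAlgebraHomeomorph a b).continuous

theorem continuous_quadraticAlgebra_of_re_of_im {T : Type*} [TopologicalSpace T]
    {f : T → QuadraticAlgebra A a b} (hre : Continuous fun t ↦ (f t).re)
    (him : Continuous fun t ↦ (f t).im) : Continuous f :=
  (quadraticAlgebraHomeomorph a b).comp_continuous_iff.mp (hre.prodMk him)

instance [CompactSpace A] : CompactSpace (QuadraticAlgebra A a b) :=
  (quadraticAlgebraHomeomorph a b).symm.compactSpace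

instance [CommRing A] [IsTopologicalRing A] : IsTopologicalRing (QuadraticAlgebra A a b) where
  continuous_add := by
    apply continuous_quadraticAlgebra_of_re_of_im <;>
      simp only [QuadraticAlgebra.re_add, QuadraticAlgebra.im_add] <;> fun_prop
  continuous_mul := by
    apply continuous_quadraticAlgebra_of_re_of_im <;>
      simp only [QuadraticAlgebra.re_mul, QuadraticAlgebra.im_mul] <;> fun_prop
  continuous_neg := by
    apply continuous_quadraticAlgebra_of_re_of_im <;>
      simp only [QuadraticAlgebra.re_neg, QuadraticAlgebra.im_neg] <;> fun_prop

end QuadraticAlgebra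

section NodalBranch

open PowerSeries

variable {K : Type*} [CommRing K]

/-- `y` is a formal branch of the cubic `y² = xy - x³` at its node, as a power series in `x`. -/
def IsNodalBranch (y : K⟦X⟧) : Prop :=
  y * y = X * y - X ^ 3

theorem IsNodalBranch.mul_self {y : K⟦X⟧} (hy : IsNodalBranch y) : y * y = X * y - X ^ 3 :=
  hy

theorem IsNodalBranch.X_sub {y : K⟦X⟧} (hy : IsNodalBranch y) : IsNodalBranch (X - y) := by
  rw [IsNodalBranch]
  linear_combination hy.mul_self

theorem IsNodalBranch.constantCoeff_eq_zero [NoZeroDivisors K] {y : K⟦X⟧}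
    (hy : IsNodalBranch y) : constantCoeff y = 0 := by
  simpa [mul_self_eq_zero] using congrArg constantCoeff hy.mul_self

variable (K)

/-- The branch `y = x² + x³ + 2x⁴ + ⋯` tangent to the line `y = 0`. -/
noncomputable def catalanBranch : K⟦X⟧ :=
  X ^ 2 * catalanSeries.map (Nat.castRingHom K)

theorem isNodalBranch_catalanBranch : IsNodalBranch (catalanBranch K) := by
  have hcatalan := congrArg (PowerSeries.map (Nat.castRingHom K)) catalanSeries_sq_mul_X_add_one
  simp only [map_add, map_mul, map_pow, map_one, map_X] at hcatalan
  rw [IsNodalBranch, catalanBranch]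
  linear_combination X ^ 3 * hcatalan

theorem coeff_one_catalanBranch : coeff 1 (catalanBranch K) = 0 := by
  simp [catalanBranch, coeff_X_pow_mul']

end NodalBranch

namespace NodalSmoothing

open Polynomial IsLocalRing Topology

open scoped PowerSeries.WithPiTopology QuadraticAlgebra

variable (p : ℕ) [Fact p.Prime]

theorem natCast_mem_maximalIdeal : (p : ℤ_[p]) ∈ maximalIdeal ℤ_[p] := by
  rw [PadicInt.maximalIdeal_eq_span_p]
  exact Ideal.mem_span_singleton_self _

/-- The ring `ℤ_[p][x, y] / (y² - xy + x³ - p)`, in which `y` is `ω`: an arithmetic smoothing of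
the nodal cubic. -/
abbrev Coord : Type := QuadraticAlgebra ℤ_[p][X] (C (p : ℤ_[p]) - X ^ 3) X

/-- The completion of `Coord p` at the origin of its special fibre. -/
abbrev Formal : Type :=
  QuadraticAlgebra (PowerSeries ℤ_[p]) (PowerSeries.C (p : ℤ_[p]) - PowerSeries.X ^ 3)
    PowerSeries.X

variable {p} {y : PowerSeries (ResidueField ℤ_[p])} (hy : IsNodalBranch y)

/-- Restriction of functions to a formal branch `y` of the special fibre. -/
noncomputable def branch : Coord p →ₐ[ℤ_[p][X]] PowerSeries (ResidueField ℤ_[p]) :=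
  QuadraticAlgebra.lift ⟨y, by
    have hp : residue ℤ_[p] p = 0 := (residue_eq_zero_iff _).mpr (natCast_mem_maximalIdeal p)
    simp only [Algebra.smul_def, PowerSeries.algebraMap_apply', ResidueField.algebraMap_eq]
    push_cast
    simp only [map_sub, map_pow, PowerSeries.map_C, PowerSeries.map_X, hp, map_zero]
    linear_combination hy.mul_self⟩

theorem branch_apply (z : Coord p) :
    branch hy z = z.re.map (residue ℤ_[p]) + z.im.map (residue ℤ_[p]) * y := by
  simp [branch, Algebra.smul_def, PowerSeries.algebraMap_apply']

theorem constantCoeff_branch (z : Coord p) :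
    PowerSeries.constantCoeff (branch hy z) = residue ℤ_[p] (z.re.coeff 0) := by
  simp [branch_apply, hy.constantCoeff_eq_zero, Polynomial.constantCoeff_coe,
    -Polynomial.polynomial_map_coe]

theorem branch_eq_zero_iff (z : Coord p) :
    branch hy z = 0 ↔ z.re.map (residue ℤ_[p]) = 0 ∧ z.im.map (residue ℤ_[p]) = 0 := by
  refine ⟨fun hz ↦ eq_zero_of_nodal_cubic_eq_zero ?_, fun hz ↦ by simp [branch_apply, hz]⟩
  rw [branch_apply] at hz
  apply Polynomial.coe_injective
  push_cast
  -- Multiplying by the restriction to the other branch `x - y` gives the norm.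
  linear_combination
    (z.re.map (residue ℤ_[p]) + z.im.map (residue ℤ_[p]) * (PowerSeries.X - y)) * hz +
      (z.im.map (residue ℤ_[p]) : PowerSeries (ResidueField ℤ_[p])) ^ 2 * hy.mul_self

/-- Expansion of functions into power series at the origin of the special fibre. -/
noncomputable def toFormal : Coord p →ₐ[ℤ_[p][X]] Formal p :=
  QuadraticAlgebra.lift ⟨.omega, by
    rw [QuadraticAlgebra.omega_mul_omega_eq_mk]
    apply QuadraticAlgebra.ext <;> simp [polynomial_smul_powerSeries, -map_natCast]⟩

theorem toFormal_apply (z : Coord p) : toFormal z = ⟨z.re, z.im⟩ := by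
  apply QuadraticAlgebra.ext <;> simp [toFormal, polynomial_smul_powerSeries]

variable (p) in
/-- The maximal ideal `(p, x, y)`, as the kernel of evaluation at the origin along a branch. -/
noncomputable def origin : Ideal (Coord p) :=
  RingHom.ker (PowerSeries.constantCoeff.comp
    (branch (isNodalBranch_catalanBranch (ResidueField ℤ_[p]))).toRingHom)

instance : (origin p).IsPrime := RingHom.ker_isPrime _

theorem mem_origin {z : Coord p} : z ∈ origin p ↔ z.re.coeff 0 ∈ maximalIdeal ℤ_[p] := by
  rw [← residue_eq_zero_iff, ← constantCoeff_branch (isNodalBranch_catalanBranch _)]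
  rfl

variable (p) in
/-- The local ring of `Coord p` at the origin. -/
abbrev OriginRing : Type := Localization.AtPrime (origin p)

instance : IsNoetherianRing (OriginRing p) :=
  haveI : IsNoetherianRing (Coord p) := .of_finite ℤ_[p][X] _
  inferInstance

theorem isUnit_branch {t : Coord p} (ht : t ∉ origin p) : IsUnit (branch hy t) := by
  rwa [PowerSeries.isUnit_iff_constantCoeff, isUnit_iff_ne_zero, constantCoeff_branch, ne_eq,
    residue_eq_zero_iff, ← mem_origin]

theorem isUnit_toFormal {t : Coord p} (ht : t ∉ origin p) : IsUnit (toFormal t) := by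
  rw [QuadraticAlgebra.isUnit_iff_norm_isUnit, PowerSeries.isUnit_iff_constantCoeff,
    ← notMem_maximalIdeal]
  have hnorm : PowerSeries.constantCoeff (toFormal t).norm =
      t.re.coeff 0 ^ 2 - p * t.im.coeff 0 ^ 2 := by
    simp only [toFormal_apply, QuadraticAlgebra.norm_def, map_sub, map_add, map_mul, map_pow,
      map_natCast, constantCoeff_coe, PowerSeries.constantCoeff_X]
    ring
  rw [hnorm, Submodule.sub_mem_iff_left _ (Ideal.mul_mem_right _ _ (natCast_mem_maximalIdeal p))]
  exact fun h ↦ ht (mem_origin.mpr (Ideal.IsPrime.mem_of_pow_mem inferInstance _ h))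

/-- The extension of `branch` to the local ring. -/
noncomputable def localBranch : OriginRing p →+* PowerSeries (ResidueField ℤ_[p]) :=
  IsLocalization.lift (M := (origin p).primeCompl) (g := (branch hy).toRingHom)
    fun t ↦ isUnit_branch hy t.2

@[simp]
theorem localBranch_algebraMap (z : Coord p) :
    localBranch hy (algebraMap _ _ z) = branch hy z :=
  IsLocalization.lift_eq _ z

variable (p) in
/-- The extension of `toFormal` to the local ring. -/
noncomputable def localToFormal : OriginRing p →+* Formal p :=
  IsLocalization.lift (M := (origin p).primeCompl) (g := toFormal.toRingHom)
    fun t ↦ isUnit_toFormal t.2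

@[simp]
theorem localToFormal_algebraMap (z : Coord p) :
    localToFormal p (algebraMap _ _ z) = toFormal z :=
  IsLocalization.lift_eq _ z

theorem denseRange_localToFormal : DenseRange (localToFormal p) := by
  have hpoly := PowerSeries.WithPiTopology.denseRange_toPowerSeries ℤ_[p]
  have hdense := (quadraticAlgebraHomeomorph (A := PowerSeries ℤ_[p])
    (PowerSeries.C (p : ℤ_[p]) - PowerSeries.X ^ 3) PowerSeries.X).symm.surjective.denseRange.comp
      (hpoly.prodMap hpoly) (Homeomorph.continuous _)
  refine hdense.mono ?_
  rintro _ ⟨⟨c, d⟩, rfl⟩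
  exact ⟨algebraMap (Coord p) _ ⟨c, d⟩, by rw [localToFormal_algebraMap, toFormal_apply]; rfl⟩

theorem mem_origin_pow_of_toFormal_mem {k : ℕ} {b : Coord p}
    (hre : (toFormal b).re ∈ lowCoeffIdeal (maximalIdeal ℤ_[p] ^ k) k)
    (him : (toFormal b).im ∈ lowCoeffIdeal (maximalIdeal ℤ_[p] ^ k) k) : b ∈ origin p ^ k := by
  rw [toFormal_apply] at hre him
  have hmap {f : ℤ_[p][X]} (hf : (f : PowerSeries ℤ_[p]) ∈
      lowCoeffIdeal (maximalIdeal ℤ_[p] ^ k) k) : algebraMap _ (Coord p) f ∈ origin p ^ k := by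
    refine Ideal.le_comap_pow (algebraMap ℤ_[p][X] (Coord p)) k
      (mem_pow_of_coe_mem_lowCoeffIdeal ?_ ?_ hf)
    · rw [Ideal.map_le_iff_le_comap]
      intro c hc
      simpa [mem_origin] using hc
    · simp [mem_origin]
  have hb : b = algebraMap _ _ b.re + algebraMap _ _ b.im * .omega := by
    apply QuadraticAlgebra.ext <;> simp
  rw [hb]
  exact add_mem (hmap hre) (Ideal.mul_mem_right _ _ (hmap him))

theorem maximalIdeal_pow_mem_comap_nhds (k : ℕ) :
    ((maximalIdeal (OriginRing p) ^ k : Ideal (OriginRing p)) : Set (OriginRing p)) ∈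
      (𝓝 0).comap (localToFormal p) := by
  set L := lowCoeffIdeal (maximalIdeal ℤ_[p] ^ k) k
  have hL : IsOpen (L : Set (PowerSeries ℤ_[p])) :=
    isOpen_lowCoeffIdeal (isOpen_maximalIdeal_pow ℤ_[p] k) k
  refine ⟨{z | z.re ∈ L ∧ z.im ∈ L}, ?_, ?_⟩
  · refine IsOpen.mem_nhds ?_ (by simp)
    exact (hL.preimage continuous_quadraticAlgebra_re).inter
      (hL.preimage continuous_quadraticAlgebra_im)
  · rintro x ⟨hre, him⟩
    obtain ⟨b, t, rfl⟩ := IsLocalization.exists_mk'_eq (origin p).primeCompl x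
    have hb : toFormal b = toFormal t * localToFormal p (IsLocalization.mk' _ b t) := by
      rw [← localToFormal_algebraMap, ← localToFormal_algebraMap, ← map_mul,
        IsLocalization.mk'_spec']
    have hbk : b ∈ origin p ^ k := by
      apply mem_origin_pow_of_toFormal_mem <;> rw [hb]
      · exact add_mem (L.mul_mem_left _ hre) (L.mul_mem_left _ him)
      · exact add_mem (add_mem (L.mul_mem_left _ him) (L.mul_mem_left _ hre))
          (L.mul_mem_left _ him)
    rw [SetLike.mem_coe, IsLocalization.mk'_eq_mul_mk'_one,
      ← IsLocalization.AtPrime.map_eq_maximalIdeal (origin p), ← Ideal.map_pow]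
    exact Ideal.mul_mem_right _ _ (Ideal.mem_map_of_mem _ hbk)

theorem formal_norm_ne_zero {z : Formal p} (hz : z ≠ 0) : z.norm ≠ 0 := by
  contrapose! hz
  refine eq_zero_of_quadraticAlgebra_norm_eq_zero (fun c d hcd ↦ ?_) hz
  refine eq_zero_of_sq_eq_prime_mul_sq PadicInt.prime_p ?_
  simp only [map_sub, map_pow, map_natCast, PowerSeries.constantCoeff_X] at hcd
  linear_combination hcd

theorem exists_mul_eq_localToFormal {z : Formal p} (hz : z ≠ 0) :
    ∃ u, ∃ q ≠ 0, u * z = localToFormal p q := by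
  obtain ⟨u, q, hq, huq⟩ := exists_mul_eq_coe_polynomial (formal_norm_ne_zero hz)
  let q' : Coord p := algebraMap _ _ q
  have hq' : toFormal q' = algebraMap _ _ (q : PowerSeries ℤ_[p]) := by
    rw [toFormal_apply]
    apply QuadraticAlgebra.ext <;> simp [q']
  refine ⟨algebraMap _ _ u * star z, algebraMap _ _ q', fun h0 ↦ hq ?_, ?_⟩
  · have hre := congrArg QuadraticAlgebra.re (congrArg (localToFormal p) h0)
    simpa [hq'] using hre
  · rw [localToFormal_algebraMap, hq', ← huq, map_mul,
      QuadraticAlgebra.algebraMap_norm_eq_mul_star]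
    ring

variable (p) in
theorem isWeaklyQuasiComplete : IsWeaklyQuasiComplete (OriginRing p) :=
  .of_denseRange denseRange_localToFormal maximalIdeal_pow_mem_comap_nhds fun _ ↦
    exists_mul_eq_localToFormal

theorem ker_localBranch_le {y' : PowerSeries (ResidueField ℤ_[p])} (hy' : IsNodalBranch y') :
    RingHom.ker (localBranch hy) ≤ RingHom.ker (localBranch hy') := by
  intro x hx
  obtain ⟨b, t, rfl⟩ := IsLocalization.exists_mk'_eq (origin p).primeCompl x
  rw [RingHom.mem_ker, localBranch, IsLocalization.lift_mk'_spec, mul_zero] at hx ⊢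
  exact (branch_eq_zero_iff hy' b).mpr ((branch_eq_zero_iff hy b).mp hx)

theorem maximalIdeal_le_comap_localBranch :
    maximalIdeal (OriginRing p) ≤ (Ideal.span {PowerSeries.X}).comap (localBranch hy) := by
  rw [← IsLocalization.AtPrime.map_eq_maximalIdeal (origin p), Ideal.map_le_iff_le_comap]
  intro z hz
  rw [Ideal.mem_comap, Ideal.mem_comap, localBranch_algebraMap, Ideal.mem_span_singleton,
    PowerSeries.X_dvd_iff, constantCoeff_branch, residue_eq_zero_iff]
  exact mem_origin.mp hz

theorem exists_X_pow_dvd_branch_and_coeff_one_branch (s : ℕ) (hy1 : PowerSeries.coeff 1 y = 0) :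
    ∃ t : Coord p, PowerSeries.X ^ s ∣ branch hy t ∧
      PowerSeries.coeff 1 (branch hy.X_sub t) = 1 := by
  obtain ⟨P, hP⟩ :=
    Polynomial.map_surjective (residue ℤ_[p]) residue_surjective (PowerSeries.trunc s y)
  -- The witness is the function `ω - P`.
  refine ⟨⟨-P, 1⟩, ?_, ?_⟩
  · rw [branch_apply, PowerSeries.X_pow_dvd_iff]
    intro n hn
    simp [hP, PowerSeries.coeff_trunc, hn, -Polynomial.polynomial_map_coe]
  · simp [branch_apply, hP, PowerSeries.coeff_trunc, hy1, -Polynomial.polynomial_map_coe]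

variable (p) in
theorem not_isQuasiComplete : ¬ IsQuasiComplete (OriginRing p) := by
  intro hR
  let hy := isNodalBranch_catalanBranch (ResidueField ℤ_[p])
  have hX : ⨅ n, Ideal.span {(PowerSeries.X : PowerSeries (ResidueField ℤ_[p]))} ^ n = ⊥ :=
    Ideal.iInf_pow_eq_bot_of_isDomain _
      (by simp [Ideal.span_singleton_eq_top, PowerSeries.X_prime.not_isUnit])
  obtain ⟨s, hs⟩ := hR.exists_comap_pow_le (localBranch hy) hX 2
  obtain ⟨t, ht, ht1⟩ :=
    exists_X_pow_dvd_branch_and_coeff_one_branch hy s (coeff_one_catalanBranch _)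
  have hle : RingHom.ker (localBranch hy) ⊔ maximalIdeal (OriginRing p) ^ 2 ≤
      (Ideal.span {PowerSeries.X} ^ 2).comap (localBranch hy.X_sub) := by
    refine sup_le ?_ ?_
    · exact (ker_localBranch_le hy _).trans (Ideal.comap_mono bot_le)
    · exact (Ideal.pow_right_mono (maximalIdeal_le_comap_localBranch _) 2).trans
        (Ideal.le_comap_pow _ 2)
  have ht2 : PowerSeries.X ^ 2 ∣ branch hy.X_sub t := by
    rw [← localBranch_algebraMap, ← Ideal.mem_span_singleton, ← Ideal.span_singleton_pow]
    refine hle (hs ?_)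
    rwa [Ideal.mem_comap, localBranch_algebraMap, Ideal.span_singleton_pow,
      Ideal.mem_span_singleton]
  exact one_ne_zero (ht1.symm.trans (PowerSeries.X_pow_dvd_iff.mp ht2 1 one_lt_two))

end NodalSmoothing

/-- There exists a weakly quasi-complete Noetherian local ring that is not
quasi-complete. -/
theorem exists_weaklyQuasiComplete_not_quasiComplete :
    ∃ (R : Type) (_ : CommRing R) (_ : IsLocalRing R) (_ : IsNoetherianRing R),
      IsWeaklyQuasiComplete R ∧ ¬ IsQuasiComplete R :=
  ⟨NodalSmoothing.OriginRing 2, inferInstance, inferInstance, inferInstance,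
    NodalSmoothing.isWeaklyQuasiComplete 2, NodalSmoothing.not_isQuasiComplete 2⟩
end
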